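/- arXiv:1906.10444 — 2 statements merged into one kernel-verified Lean document; each statement's English description precedes it below -/
import Mathlib

section
/- Let 𝔽_r ⊆ 𝔽_l be finite fields with l = r^h, and let C ⊆ 𝔽_l^n be an 𝔽_l-linear code. Then (C|𝔽_r)^⊥ = Tr(C^⊥), where C|𝔽_r = C ∩ 𝔽_r^n is the subfield subcode, Tr(C^⊥) is the coordinatewise image of the dual code C^⊥ under the trace map Tr: 𝔽_l → 𝔽_r, and the duals on the left and right are taken with respect to the standard bilinear forms on 𝔽_r^n and 𝔽_l^n respectively (Delsarte's theorem). -/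
/-- The dual of a code in F^ι with respect to the standard bilinear form
⟨u,v⟩ = Σ_i u_i v_i. -/
def dualCode {F : Type*} [Field F] {ι : Type*} [Fintype ι]
    (C : Submodule F (ι → F)) : Submodule F (ι → F) where
  carrier := {c | ∀ u ∈ C, ∑ i, u i * c i = 0}
  zero_mem' := by simp
  add_mem' := by
    intro a b ha hb u hu
    have := ha u hu
    have := hb u hu
    simp only [Pi.add_apply, mul_add, Finset.sum_add_distrib, *]
    simp
  smul_mem' := by
    intro c a ha u hu
    have h := ha u hu
    simp only [Pi.smul_apply, smul_eq_mul, mul_left_comm, ← Finset.mul_sum, h, mul_zero]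

/-- The trace map Tr : 𝔽_{r^h} → 𝔽_r, x ↦ x + x^r + ⋯ + x^{r^{h-1}}
(with values regarded in the big field). -/
def trFun (L : Type*) [Field L] (r h : ℕ) (x : L) : L :=
  ∑ k ∈ Finset.range h, x ^ r ^ k

/-- The subfield subcode C|𝔽_r = C ∩ 𝔽_r^n, as an 𝔽_r-subspace, where 𝔽_r is
identified with the image of K inside L. -/
def subfieldSubcode (K : Type*) {L : Type*} [Field K] [Field L] [Algebra K L]
    {ι : Type*} (C : Submodule L (ι → L)) : Submodule K (ι → L) :=
  C.restrictScalars K ⊓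
    Submodule.pi Set.univ fun _ => Subalgebra.toSubmodule (⊥ : Subalgebra K L)

theorem sep_aux {F : Type*} [Field F] {n : ℕ} (W : Submodule F (Fin n → F)) (v : Fin n → F)
    (hv : v ∉ W) : ∃ w : Fin n → F, (∀ u ∈ W, ∑ i, u i * w i = 0) ∧ ∑ i, v i * w i ≠ 0 := by
  obtain ⟨f, hf, hW⟩ := Submodule.exists_le_ker_of_notMem hv
  have key : ∀ u : Fin n → F, ∑ i, u i * f (Pi.single i 1) = f u := by
    intro u
    conv_rhs => rw [pi_eq_sum_univ' u]
    simp [map_sum]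
  refine ⟨fun i => f (Pi.single i 1), fun u hu => ?_, ?_⟩
  · rw [key]; exact hW hu
  · rw [key]; exact hf

theorem tr_aux (r h : ℕ)
    (K L : Type*) [Field K] [Fintype K] [Field L] [Fintype L] [Algebra K L]
    (hcK : Fintype.card K = r) (hcL : Fintype.card L = r ^ h) (x : L) :
    trFun L r h x = algebraMap K L (Algebra.trace K L x) := by
  have h1 : Module.finrank K L = h := by
    have := Module.card_eq_pow_finrank (K := K) (V := L)
    rw [hcL, hcK] at this
    exact (Nat.pow_right_injective (hcK ▸ Fintype.one_lt_card) this).symm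
  rw [FiniteField.algebraMap_trace_eq_sum_pow, h1, Nat.card_eq_fintype_card, hcK, trFun]

/-- Delsarte: (C|𝔽_r)^⊥ = Tr(C^⊥).  The left-hand side is the set of
vectors with coordinates in 𝔽_r orthogonal to every codeword of C with coordinates in
𝔽_r; the right-hand side is the coordinatewise trace image of the dual code C^⊥. -/
theorem delsarte_dual_subfieldSubcode (r h n : ℕ) (hh : 0 < h)
    (K L : Type*) [Field K] [Fintype K] [Field L] [Fintype L] [Algebra K L]
    (hcK : Fintype.card K = r) (hcL : Fintype.card L = r ^ h)
    (C : Submodule L (Fin n → L)) :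
    {c : Fin n → L | (∀ i, c i ∈ Set.range (algebraMap K L)) ∧
        ∀ u, u ∈ subfieldSubcode K C → ∑ i, u i * c i = 0} =
      (fun u => fun i => trFun L r h (u i)) '' (dualCode C : Set (Fin n → L)) := by
  have htr := tr_aux r h K L hcK hcL
  ext c
  simp only [Set.mem_ofPred_eq, Set.mem_image, SetLike.mem_coe]
  constructor
  · rintro ⟨hc, horth⟩
    choose a ha using hc
    let T : Submodule K (Fin n → K) :=
      ((dualCode C).restrictScalars K).map ((Algebra.trace K L).compLeft (Fin n))
    by_cases haT : a ∈ T
    · obtain ⟨u, hu, hua⟩ := haT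
      refine ⟨u, hu, ?_⟩
      funext i
      rw [htr, ← ha i, ← hua]
      rfl
    · exfalso
      obtain ⟨w, hw, hwa⟩ := sep_aux T a haT
      have hwC : (fun i => algebraMap K L (w i)) ∈ C := by
        by_contra hn
        obtain ⟨z, hz, hs⟩ := sep_aux C _ hn
        obtain ⟨y, hy⟩ := Algebra.trace_surjective K L 1
        set s := ∑ i, algebraMap K L (w i) * z i with hsdef
        have hm : (y / s) • z ∈ dualCode C := (dualCode C).smul_mem _ hz
        have h0 := hw _ (Submodule.mem_map_of_mem (f := (Algebra.trace K L).compLeft (Fin n))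
          (p := (dualCode C).restrictScalars K) hm)
        have h2 : Algebra.trace K L y = 0 := by
          rw [← h0]
          have : y = ∑ i, w i • ((y / s) * z i) := by
            simp only [Algebra.smul_def, mul_left_comm _ (y / s)]
            rw [← Finset.mul_sum, ← hsdef, div_mul_cancel₀ _ hs]
          conv_lhs => rw [this]
          simp [map_sum, mul_comm]
        rw [hy] at h2
        exact one_ne_zero h2
      have h3 := horth (fun i => algebraMap K L (w i))
        ⟨hwC, fun i _ => Algebra.mem_bot.2 ⟨w i, rfl⟩⟩
      apply hwa
      apply (algebraMap K L).injective
      rw [map_zero, ← h3, map_sum]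
      refine Finset.sum_congr rfl fun i _ => ?_
      rw [map_mul, ha, mul_comm]
  · rintro ⟨z, hz, rfl⟩
    refine ⟨fun i => ⟨_, (htr _).symm⟩, ?_⟩
    rintro u ⟨huC, hu⟩
    have hb : ∀ i, ∃ b, algebraMap K L b = u i := fun i => Algebra.mem_bot.1 (hu i trivial)
    choose b hb using hb
    have h0 : ∑ i, u i * z i = 0 := hz u huC
    have h1 : ∑ i, b i * Algebra.trace K L (z i) = 0 := by
      rw [← map_zero (Algebra.trace K L), ← h0, map_sum]
      refine Finset.sum_congr rfl fun i _ => ?_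
      rw [← hb, ← Algebra.smul_def, map_smul, smul_eq_mul]
    rw [← map_zero (algebraMap K L), ← h1, map_sum]
    refine Finset.sum_congr rfl fun i _ => ?_
    beta_reduce
    rw [htr, map_mul, hb]
end

section
/- Let 𝔽_r ⊆ 𝔽_l be finite fields with l = r^h, and let C ⊆ 𝔽_l^n be an 𝔽_l-linear code of dimension k over 𝔽_l. Then the dimension k₀ of the subfield subcode C|𝔽_r over 𝔽_r satisfies k₀ = n − h(n − k) + dim_{𝔽_r} ker(Tr|_{C^⊥}), where Tr|_{C^⊥}: C^⊥ → 𝔽_r^n is the coordinatewise trace map restricted to the dual code C^⊥ and its kernel is an 𝔽_r-subspace of C^⊥ (Véron's formula). -/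
theorem dualCode_aux {F : Type*} [Field F] {n : ℕ} (C : Submodule F (Fin n → F)) :
    Module.finrank F (dualCode C) = n - Module.finrank F C ∧ dualCode (dualCode C) = C := by
  set B : LinearMap.BilinForm F (Fin n → F) := dotProductBilin F F with hB
  have hBa : ∀ u v, B u v = ∑ i, u i * v i := fun u v => rfl
  have hs : ∀ u v, B u v = B v u := fun u v => by
    simp only [hBa, mul_comm]
  have hr : B.IsRefl := fun u v h => by rw [hs, h]
  have hl : ∀ u, (∀ v, B u v = 0) → u = 0 := fun u h => dotProduct_eq_zero u h
  have hnd : B.Nondegenerate :=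
    ⟨hl, fun u h => hl u fun v => by rw [hs]; exact h v⟩
  have hD : ∀ C : Submodule F (Fin n → F), dualCode C = B.orthogonal C := fun C => rfl
  refine ⟨?_, ?_⟩
  · rw [hD, LinearMap.BilinForm.finrank_orthogonal hnd]; simp
  · rw [hD, hD, LinearMap.BilinForm.orthogonal_orthogonal hnd hr]

/-- Véron's formula: k₀ = n - h(n-k) + dim_{𝔽_r} ker(Tr|_{C^⊥}),
stated in the subtraction-free form k₀ + h(n-k) = n + dim ker(Tr|_{C^⊥}), where the
kernel of the coordinatewise trace restricted to C^⊥ is an 𝔽_r-subspace of C^⊥. -/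
theorem veron_dim_subfieldSubcode (r h n k : ℕ) (hh : 0 < h)
    (K L : Type*) [Field K] [Fintype K] [Field L] [Fintype L] [Algebra K L]
    (hcK : Fintype.card K = r) (hcL : Fintype.card L = r ^ h)
    (C : Submodule L (Fin n → L)) (hk : Module.finrank L C = k) :
    ∃ N : Submodule K (Fin n → L),
      (N : Set (Fin n → L)) =
        {u : Fin n → L | u ∈ dualCode C ∧ ∀ i, trFun L r h (u i) = 0} ∧
      Module.finrank K (subfieldSubcode K C) + h * (n - k) = n + Module.finrank K N := by
  have hKL : Module.finrank K L = h := by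
    have h1 := Module.card_eq_pow_finrank (K := K) (V := L)
    rw [hcL, hcK] at h1
    have h2 : 1 < r := hcK ▸ Fintype.one_lt_card
    exact (Nat.pow_right_injective h2 h1).symm
  have htr : ∀ x : L, trFun L r h x = algebraMap K L (Algebra.trace K L x) := by
    intro x
    rw [FiniteField.algebraMap_trace_eq_sum_pow, hKL, Nat.card_eq_fintype_card, hcK]
    rfl
  obtain ⟨hdim, hdd⟩ := dualCode_aux C
  set T : (Fin n → L) →ₗ[K] (Fin n → K) := (Algebra.trace K L).compLeft (Fin n) with hT
  have hTa : ∀ u i, T u i = Algebra.trace K L (u i) := fun u i => rfl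
  set D : Submodule K (Fin n → L) := (dualCode C).restrictScalars K with hD
  have hDm : ∀ u, u ∈ D ↔ u ∈ dualCode C := fun u => Iff.rfl
  refine ⟨D ⊓ LinearMap.ker T, ?_, ?_⟩
  · ext u
    simp only [SetLike.mem_coe, Submodule.mem_inf, hDm, LinearMap.mem_ker, Set.mem_setOf_eq, htr,
      funext_iff, hTa, Pi.zero_apply, map_eq_zero]
  have hDf : Module.finrank K D = h * (n - k) := by
    rw [← hk, ← hdim, ← hKL]
    exact (Module.finrank_mul_finrank K L (dualCode C)).symm
  have hrn : Module.finrank K (D.map T) + Module.finrank K (D ⊓ LinearMap.ker T : Submodule K _)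
      = Module.finrank K D := by
    have := (T.domRestrict D).finrank_range_add_finrank_ker
    rw [LinearMap.range_domRestrict, LinearMap.ker_domRestrict] at this
    rw [← this, ← Submodule.map_comap_subtype, Submodule.finrank_map_subtype_eq]
  obtain ⟨hdim2, -⟩ := dualCode_aux (D.map T)
  have hle : Module.finrank K (D.map T) ≤ n := by
    simpa using Submodule.finrank_le (D.map T)
  set E : (Fin n → K) →ₗ[K] (Fin n → L) := (Algebra.linearMap K L).compLeft (Fin n) with hE
  have hEa : ∀ u i, E u i = algebraMap K L (u i) := fun u i => rfl
  have hEi : Function.Injective E := by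
    intro u v huv
    funext i
    exact (algebraMap K L).injective (congrFun huv i)
  have key : ∀ a : Fin n → K, a ∈ dualCode (D.map T) ↔ E a ∈ C := by
    intro a
    have hsum : ∀ u : Fin n → L, ∑ i, T u i * a i = Algebra.trace K L (∑ i, u i * E a i) := by
      intro u
      rw [map_sum]
      refine Finset.sum_congr rfl fun i _ => ?_
      rw [hTa, hEa, mul_comm (u i), ← Algebra.smul_def, map_smul, smul_eq_mul, mul_comm]
    have e1 : a ∈ dualCode (D.map T) ↔ ∀ u ∈ dualCode C, ∑ i, T u i * a i = 0 := by
      change (∀ w ∈ D.map T, ∑ i, w i * a i = 0) ↔ _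
      constructor
      · intro H u hu
        exact H _ ⟨u, hu, rfl⟩
      · rintro H _ ⟨u, hu, rfl⟩
        exact H u hu
    have e2 : E a ∈ C ↔ ∀ u ∈ dualCode C, ∑ i, u i * E a i = 0 := by
      conv_lhs => rw [← hdd]
      exact Iff.rfl
    rw [e1, e2]
    constructor
    · intro H u hu
      refine (traceForm_nondegenerate K L).1 _ fun c => ?_
      have := H (c • u) ((dualCode C).smul_mem c hu)
      rw [hsum] at this
      rw [Algebra.traceForm_apply, ← this, mul_comm, Finset.mul_sum]
      simp [mul_assoc]
    · intro H u hu
      rw [hsum, H u hu, map_zero]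
  have hsub : subfieldSubcode K C = (dualCode (D.map T)).map E := by
    ext v
    constructor
    · rintro ⟨hv, hv'⟩
      have hx : ∀ i, ∃ x : K, algebraMap K L x = v i := fun i =>
        Algebra.mem_bot.1 (hv' i (Set.mem_univ i))
      choose a ha using hx
      have hav : E a = v := funext ha
      exact ⟨a, (key a).2 (hav ▸ hv), hav⟩
    · rintro ⟨a, ha, rfl⟩
      exact ⟨(key a).1 ha, fun i _ => Algebra.mem_bot.2 ⟨a i, rfl⟩⟩
  have hf : Module.finrank K (subfieldSubcode K C) = n - Module.finrank K (D.map T) := by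
    rw [hsub, ← hdim2]
    exact (Submodule.equivMapOfInjective E hEi _).finrank_eq.symm
  omega
end
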